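/- Let G = N_{3,4}, let f : H → G be a homomorphism from a finite-index subgroup H of G, let m, n, k, j be positive integers with aᵐ, bⁿ, cᵏ, dʲ ∈ H, let K = ⟨aᵐ, bⁿ, cᵏ, dʲ⟩, and let N_f be the associated 4×4 integer exponent matrix. If det(N_f) ≠ 0, then f(Z(K)) ≤ Z(K), where Z(K) is the center of K. -/

import Mathlib

/-!
The relations of `N_{3,4}` force all commutators of weight three to be central (`central_of_table`),
so every element has a normal form `a^* b^* c^* d^* x^* y^* z^* w^* u^* v^* p^* q^* r^*`
(`N34.exists_normal_form`), where `x, y, z, w` are the commutators `[a,c], [a,d], [b,c], [b,d]` and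
`u, v, p, q, r` are central. Sending `a, b, c, d` to the basis vectors `A, B, C, D` defines a
homomorphism `φ` to the Baker–Campbell–Hausdorff group `Mal` of a 13-dimensional rational nilpotent
Lie algebra, and the normal form shows that `φ` is injective (`N34.φ_injective`).

In `Mal`, powers are scalar multiples, commuting elements have vanishing bracket, and commutators
of weight three are iterated Lie brackets of the weight-one parts. Hence an element commuting with
powers of `a` and `c` has weight three, i.e. is a product of powers of `u, v, p, q, r`
(`N34.exists_central_form_of_commute`). This applies to the elements of `Z(K)`.

The elements `aᵐ, bⁿ, cᵏ, dʲ` satisfy the defining relations of the group up to raising both sides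
to suitable powers. Applying `φ ∘ f` and dividing by `m, n, k, j` yields four vectors satisfying the
defining relations of the Lie algebra, and `det Nf ≠ 0` says that their weight-one parts are
linearly independent. The relations are rigid: these weight-one parts can only be `A, B, C, D`
(`Mal.rigid`), so `Nf = diag(m, n, k, j)` (`N34.exponents`). Therefore `f` fixes the threefold
commutators of `aᵐ, bⁿ, cᵏ, dʲ`. A common power of each element `z ∈ Z(K)` is a product of powers of
these, so `φ (f z)` and `φ z` agree after multiplication by a positive integer, and `f z = z`
(`N34.map_central_form`).
-/

/-- The commutator `[x, y] = x⁻¹ y⁻¹ x y`. -/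
def cmt {G : Type*} [Group G] (x y : G) : G := x⁻¹ * y⁻¹ * x * y

/-- The defining relators of the Bludov–Gusev group `N_{3,4}` on generators
`a, b, c, d` (indexed by `0, 1, 2, 3`). -/
def N34Rels : Set (FreeGroup (Fin 4)) :=
  let a : FreeGroup (Fin 4) := FreeGroup.of 0
  let b : FreeGroup (Fin 4) := FreeGroup.of 1
  let c : FreeGroup (Fin 4) := FreeGroup.of 2
  let d : FreeGroup (Fin 4) := FreeGroup.of 3
  {cmt a (cmt a b), cmt (cmt a b) b, cmt a (cmt c d), cmt (cmt a d) d,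
   cmt b (cmt b c), cmt b (cmt c d), cmt c (cmt c d), cmt (cmt c d) d,
   cmt a (cmt b c) * cmt (cmt a c) b,
   cmt a (cmt b d) * cmt (cmt a d) b,
   cmt a (cmt a d) * (cmt (cmt b c) c)⁻¹,
   cmt a (cmt a c) * (cmt b (cmt b d))⁻¹,
   cmt (cmt a c) b * (cmt (cmt b d) d)⁻¹,
   cmt (cmt a c) c * (cmt (cmt b d) c)⁻¹,
   cmt (cmt a d) b * (cmt (cmt a d) c)⁻¹,
   cmt a b * (cmt (cmt a c) c)⁻¹,
   cmt c d * (cmt a (cmt a c))⁻¹}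

/-- The Bludov–Gusev group `N_{3,4}`, presented on generators `a, b, c, d`. -/
abbrev N34 : Type := PresentedGroup N34Rels

/-- The generator `a` of `N_{3,4}`. -/
def ga : N34 := PresentedGroup.of 0
/-- The generator `b` of `N_{3,4}`. -/
def gb : N34 := PresentedGroup.of 1
/-- The generator `c` of `N_{3,4}`. -/
def gc : N34 := PresentedGroup.of 2
/-- The generator `d` of `N_{3,4}`. -/
def gd : N34 := PresentedGroup.of 3

/-! ### Nilpotency from the action table -/

/-- Conjugation `e ↦ g⁻¹ e g`, written `e ^ g` in group theory. -/
def cj {Γ : Type*} [Group Γ] (g e : Γ) : Γ := g⁻¹ * e * g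

section Conj
variable {Γ : Type*} [Group Γ]

lemma cj_mul (g e h : Γ) : cj g (e * h) = cj g e * cj g h := by simp [cj, mul_assoc]

lemma cj_inv (g e : Γ) : cj g e⁻¹ = (cj g e)⁻¹ := by simp [cj, mul_assoc]

lemma cj_eq_self {g e : Γ} : cj g e = e ↔ Commute g e := by
  simp only [cj, Commute, SemiconjBy, mul_assoc, inv_mul_eq_iff_eq_mul]
  exact eq_comm

lemma cj_inj {g e h : Γ} : cj g e = cj g h ↔ e = h := by simp [cj]

/-- The consistency relation `e ^ (g h) = e ^ (h g k)` whenever `[g, h] = k`. -/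
lemma cj_cj {g h k : Γ} (hk : g * h = h * g * k) (e : Γ) :
    cj h (cj g e) = cj k (cj g (cj h e)) := by
  have : cj (g * h) e = cj (h * g * k) e := by rw [hk]
  simpa [cj, mul_assoc] using this

lemma Commute.cj {e h : Γ} (H : Commute e h) (g : Γ) : Commute (cj g e) (cj g h) := by
  have := congrArg (_root_.cj g) H.eq
  rwa [cj_mul, cj_mul] at this

lemma Commute.of_cj {g e h : Γ} (H : Commute (_root_.cj g e) (_root_.cj g h)) : Commute e h := by
  have h1 : _root_.cj g (e * h) = _root_.cj g (h * e) := by rw [cj_mul, cj_mul, H.eq]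
  simpa [_root_.cj, Commute, SemiconjBy] using h1

/-- An element commuting with `g` and `h` commutes with `k = g⁻¹ (g ^ h)`. -/
lemma Commute.of_cj_eq {t g h k : Γ} (hk : _root_.cj h g = g * k) (hg : Commute t g)
    (hh : Commute t h) : Commute t k := by
  have : k = g⁻¹ * (h⁻¹ * g * h) := by rw [← mul_left_cancel_iff (a := g), ← hk]; simp [_root_.cj]
  rw [this]
  exact (hg.inv_right).mul_right (((hh.inv_right).mul_right hg).mul_right hh)

lemma Commute.cancel_left {t e h : Γ} (H : Commute t (e * h)) (he : Commute t e) :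
    Commute t h := by simpa using he.inv_right.mul_right H

lemma Commute.cancel_right {t e h : Γ} (H : Commute t (e * h)) (hh : Commute t h) :
    Commute t e := by simpa using H.mul_right hh.inv_right

end Conj

/-- In a group with the defining relations of `N_{3,4}`, written as an action table of the
generators on the commutators `x = [a,c]`, `y = [a,d]`, `z = [b,c]`, `w = [b,d]`, `u = [a,b]`,
`v = [c,d]`, all commutators of weight three are central. Nilpotency is not part of the
presentation; it results from the consistency relations `e ^ (g h) = e ^ (h g [g, h])`. -/
lemma central_of_table {Γ : Type*} [Group Γ] {a b c d x y z w u v p q r : Γ}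
    (hv : ∀ g, Commute v g)
    (ab : a * b = b * a * u) (ac : a * c = c * a * x) (ad : a * d = d * a * y)
    (bc : b * c = c * b * z) (bd : b * d = d * b * w) (cd : c * d = d * c * v)
    (xa : cj a x = x * v⁻¹) (xb : cj b x = x * p) (xc : cj c x = x * u)
    (ya : cj a y = y * q⁻¹) (yb : cj b y = y * r) (yc : cj c y = y * r) (yd : cj d y = y)
    (za : cj a z = z * p) (zb : cj b z = z) (zc : cj c z = z * q)
    (wa : cj a w = w * r) (wb : cj b w = w * v⁻¹) (wc : cj c w = w * u) (wd : cj d w = w * p)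
    (ua : cj a u = u) (ub : cj b u = u) :
    (Commute u c ∧ Commute u d) ∧ (Commute p a ∧ Commute p b ∧ Commute p c ∧ Commute p d) ∧
    (Commute q a ∧ Commute q b ∧ Commute q c ∧ Commute q d) ∧
    (Commute r a ∧ Commute r b ∧ Commute r c ∧ Commute r d) ∧
    cj d x = x * r ∧ cj d z = z * u := by
  have vi : ∀ g, Commute v⁻¹ g := fun g => (hv g).inv_left
  have vv : ∀ g, cj g v⁻¹ = v⁻¹ := fun g => cj_eq_self.2 (vi g).symm
  have cjv : ∀ e, cj v e = e := fun e => cj_eq_self.2 (hv e)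
  have gen : ∀ {g h k : Γ}, g * h = h * g * k → cj h g = g * k ∧ cj g h = h * k⁻¹ := by
    intro g h k H
    constructor
    · rw [cj, mul_assoc, inv_mul_eq_iff_eq_mul, H, mul_assoc]
    · rw [cj, mul_assoc, inv_mul_eq_iff_eq_mul, ← mul_assoc, H]; simp
  obtain ⟨ca, Ac⟩ := gen ac
  obtain ⟨da, Ad⟩ := gen ad
  obtain ⟨cb, Bc⟩ := gen bc
  obtain ⟨db, Bd⟩ := gen bd
  have cua : Commute u a := (cj_eq_self.1 ua).symm
  have cub : Commute u b := (cj_eq_self.1 ub).symm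
  have cyd : Commute y d := (cj_eq_self.1 yd).symm
  have xd : cj d x = y⁻¹ * x * y * r := by
    have h := cj_cj cd a
    rw [ca, cjv, da, cj_mul, cj_mul, ca, da, yc] at h
    rw [mul_assoc, mul_assoc, mul_left_cancel_iff] at h
    rw [← mul_left_cancel_iff (a := y), h]; group
  have zd : cj d z = w⁻¹ * z * w * u := by
    have h := cj_cj cd b
    rw [cb, cjv, db, cj_mul, cj_mul, cb, db, wc] at h
    rw [mul_assoc, mul_assoc, mul_left_cancel_iff] at h
    rw [← mul_left_cancel_iff (a := w), h]; group
  have crd : Commute d r := by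
    have h := cj_cj cd y
    rw [yc, cjv, yd, cj_mul, yc, yd, mul_left_cancel_iff] at h
    exact cj_eq_self.1 h
  have cwyr : Commute w (y * r) := by
    have h := cj_cj bd y
    rw [yb, yd, cj_mul, yd, yb, cj_eq_self.2 crd] at h
    exact cj_eq_self.1 h.symm
  have cwy : Commute w y := by
    have h : Commute (cj b (w * v)) (cj b y) := by
      rw [cj_mul, wb, yb, cj_eq_self.2 (hv b).symm]; simpa using cwyr
    have h2 := h.of_cj.mul_left (vi y)
    simpa using h2
  have cwr : Commute w r := by
    have := cwy.inv_right.mul_right cwyr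
    simpa using this
  have cux : Commute u x := by
    have h := cj_cj ac x
    rw [xa, xc, cj_mul, cj_mul, xc, xa, ua, vv, cj_mul, cj_mul, vv, cj_eq_self.2 (Commute.refl x),
      mul_assoc, mul_assoc, mul_left_cancel_iff, (vi _).eq, mul_right_cancel_iff] at h
    exact (cj_eq_self.1 h.symm).symm
  have czwu : Commute z (w * u) := by
    have h := cj_cj bc w
    rw [wb, wc, cj_mul, cj_mul, wc, wb, ub, vv, mul_assoc w v⁻¹, (vi u).eq, ← mul_assoc,
      cj_mul z, vv, mul_right_cancel_iff] at h
    exact cj_eq_self.1 h.symm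
  have cwzd : Commute w (cj d z) := by
    have h := cj_cj bd z
    have h2 : cj b (cj d z) = cj d z := by
      rw [zd, cj_mul, cj_mul, cj_mul, cj_inv, zb, wb, ub, mul_inv_rev, inv_inv, (hv _).eq]
      simp only [mul_assoc]
      rw [(vi u).eq, ← mul_assoc w u, ← mul_assoc z, ← mul_assoc w⁻¹, mul_assoc w⁻¹ v, (hv _).eq]
      simp
    rw [zb, h2] at h
    exact cj_eq_self.1 h.symm
  have zd : cj d z = u * z := by
    rw [zd, mul_assoc, mul_assoc, czwu.eq]; group
  have cpy : Commute y p := Commute.of_cj_eq wd cwy.symm cyd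
  have cpr : Commute r p := Commute.of_cj_eq wd cwr.symm crd.symm
  have cpu : Commute u p := Commute.of_cj_eq xb cux cub
  have cpa : Commute a p := by
    have h := cj_cj ab x
    rw [xa, xb, cj_mul, cj_mul, xb, xa, vv, cj_mul, cj_mul, vv, cj_eq_self.2 cux,
      mul_assoc, mul_assoc, mul_left_cancel_iff, (vi _).eq, mul_right_cancel_iff] at h
    have h2 : cj u (cj a p) = cj u p := by rw [← h, cj_eq_self.2 cpu]
    exact cj_eq_self.1 (cj_inj.1 h2)
  have cry : Commute y r := by
    have h := cj_cj ad w
    rw [wa, wd, cj_mul, cj_mul, wd, wa, cj_eq_self.2 cpa, cj_mul, cj_mul, cj_eq_self.2 crd,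
      cj_eq_self.2 cpy, cj_eq_self.2 cwy.symm, mul_assoc, mul_assoc, mul_left_cancel_iff,
      ← cpr.eq, mul_right_cancel_iff] at h
    exact cj_eq_self.1 h.symm
  have cud : Commute u d := by
    have h := cj_cj ab d
    have e1 : cj b (cj a d) = d * (w⁻¹ * (y * r)⁻¹) := by
      rw [Ad, cj_mul, Bd, cj_inv, yb, mul_assoc]
    have e2 : cj a (cj b d) = d * (w⁻¹ * (y * r)⁻¹) := by
      rw [Bd, cj_mul, Ad, cj_inv, wa, mul_assoc, ← mul_inv_rev, ← mul_inv_rev, mul_assoc w,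
        mul_assoc y, ← cry.eq, ← mul_assoc, cwy.eq, mul_assoc, cwr.eq]
    rw [e2, ← e1] at h
    have h1 := cj_eq_self.1 h.symm
    nth_rw 1 [← ub] at h1
    nth_rw 1 [← ua] at h1
    exact h1.of_cj.of_cj
  have cuy : Commute u y := Commute.of_cj_eq da cua cud
  have cuw : Commute u w := Commute.of_cj_eq db cub cud
  have cur : Commute u r := Commute.of_cj_eq yb cuy cub
  have cuq : Commute u q := by simpa using (Commute.of_cj_eq ya cuy cua).inv_right
  have crb : Commute b r := by
    have h := cj_cj ab w
    rw [wa, wb, cj_mul, cj_mul, wb, wa, vv, cj_mul, cj_mul, vv, cj_eq_self.2 cuw, cj_eq_self.2 cur,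
      mul_assoc, mul_assoc, mul_left_cancel_iff, (vi _).eq, mul_right_cancel_iff] at h
    exact cj_eq_self.1 h
  have cpc : Commute c p := by
    have h := cj_cj cd w
    rw [wc, wd, cj_mul, cj_mul, wd, wc, cjv, cj_eq_self.2 cud.symm,
      mul_assoc, mul_assoc, mul_left_cancel_iff, ← cpu.eq, mul_left_cancel_iff] at h
    exact cj_eq_self.1 h.symm
  have cwz : Commute w z := by
    rw [zd] at cwzd
    simpa using cuw.symm.inv_right.mul_right cwzd
  have czu : Commute z u := by simpa using cwz.symm.inv_right.mul_right czwu
  have cpb : Commute b p := by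
    have h := cj_cj ab z
    rw [za, zb, cj_mul, za, zb, cj_mul, cj_eq_self.2 czu.symm, cj_eq_self.2 cpu,
      mul_left_cancel_iff] at h
    exact cj_eq_self.1 h
  have cpx : Commute p x := Commute.of_cj_eq ca cpa.symm cpc.symm
  have cpz : Commute p z := Commute.of_cj_eq cb cpb.symm cpc.symm
  have cpq : Commute p q := Commute.of_cj_eq zc cpz cpc.symm
  have cpw : Commute w p := by
    have h := cj_cj bd w
    rw [wb, wd, cj_mul, cj_mul, wd, wb, vv, cj_mul, cj_mul, vv, cj_eq_self.2 (Commute.refl w),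
      cj_eq_self.2 cpb, mul_assoc, mul_assoc, mul_left_cancel_iff, (vi _).eq,
      mul_right_cancel_iff] at h
    exact cj_eq_self.1 h.symm
  have crz : Commute z r := by
    have h := cwz.symm.cj a
    rw [wa, za] at h
    have h2 : Commute (w * r) z := h.symm.cancel_right (cpw.symm.mul_right cpr.symm).symm
    exact h2.symm.cancel_left cwz.symm
  -- `y ^ z` is computed from `a ^ z = a p⁻¹`, `d ^ z = d u⁻¹` and `y = [a, d]`
  have yz : cj z y = y * (p * (cj d p)⁻¹) := by
    have conv : ∀ {e t k : Γ}, cj e t = t * k → cj t e = e * k⁻¹ := by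
      intro e t k H
      refine (gen (g := t) (h := e) (k := k) ?_).2
      rw [mul_assoc, ← H]; simp [cj, mul_assoc]
    have h := congrArg (cj z) ad
    rw [czu.eq.symm] at zd
    rw [cj_mul, cj_mul, cj_mul, conv za, conv zd, (cud.inv_left).eq.symm, mul_assoc u⁻¹,
      ← mul_assoc (a * p⁻¹), ((cua.inv_left).mul_right (cpu.inv_inv)).eq.symm, mul_assoc,
      mul_assoc u⁻¹, mul_left_cancel_iff] at h
    have h2 : cj z y = p * (a⁻¹ * d⁻¹ * (a * d)) * (d⁻¹ * p⁻¹ * d) := by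
      have h3 : cj z y = p * a⁻¹ * d⁻¹ * (d * (a * p⁻¹) * cj z y) := by group
      rw [h3, ← h]; group
    rw [h2, ad, show a⁻¹ * d⁻¹ * (d * a * y) = y by group, cpy.eq.symm]
    simp [cj, mul_assoc]
  -- `g` stands for `[p⁻¹, d]`
  obtain ⟨g, hg⟩ : ∃ g, g = p * (cj d p)⁻¹ := ⟨_, rfl⟩
  rw [← hg] at yz
  have pd : cj d p = g⁻¹ * p := by rw [hg]; group
  have cgy : Commute y g := by
    have h := cpy.cj d
    rw [yd] at h
    rw [hg]; exact cpy.mul_right h.inv_right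
  have cug : Commute u g := Commute.of_cj_eq yz cuy czu.symm
  have cgr : Commute r g := by
    have h := cpr.cj d
    rw [cj_eq_self.2 crd] at h
    rw [hg]; exact cpr.mul_right h.inv_right
  have rc : cj c r = g * r := by
    have h := cj_cj bc y
    rw [yb, yc, cj_mul, yc, cj_mul, yb, cj_eq_self.2 crb, cj_mul, cj_mul, cj_eq_self.2 crz, yz,
      mul_assoc, mul_assoc, mul_assoc, mul_left_cancel_iff, ← mul_assoc, ← cgr.eq, mul_assoc,
      mul_left_cancel_iff] at h
    exact h
  have rx : cj x r = r * g := by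
    have h := cj_cj cd x
    rw [xc, cjv, cj_mul, xd, cj_eq_self.2 cud.symm, cj_mul, cj_mul, cj_mul, cj_inv, yc, xc, rc] at h
    have hu : u * (y * r * (g * r)) = y * r * (g * r) * u :=
      ((cuy.mul_right cur).mul_right (cug.mul_right cur)).eq
    have h1 : r * (y⁻¹ * x * y) = y⁻¹ * x * y * (r * g) := by
      have h2 : (y * r)⁻¹ * (x * u) * (y * r) * (g * r)
          = r⁻¹ * (y⁻¹ * x * y * (r * g) * r) * u := by
        rw [show (y * r)⁻¹ * (x * u) * (y * r) * (g * r)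
          = (y * r)⁻¹ * x * (u * (y * r * (g * r))) by group, hu]
        group
      rw [h2, mul_right_cancel_iff, ← mul_assoc, mul_right_cancel_iff, eq_inv_mul_iff_mul_eq] at h
      exact h
    have h2 : cj y (r * x) = cj y (x * (r * g)) := by
      rw [cj_mul, cj_mul, cj_mul, cj_eq_self.2 cry, cj_eq_self.2 cgy]
      exact h1
    have h3 : r * x = x * (r * g) := cj_inj.1 h2
    rw [cj, mul_assoc, h3]; group
  have cxw : Commute x w := by
    have h := cj_cj ac w
    rw [wa, wc, cj_mul, wc, rc, cj_mul, wa, ua, cj_mul, cj_mul, cj_eq_self.2 cux.symm, rx] at h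
    rw [cgr.eq, mul_assoc, mul_assoc, (cug.mul_right cur).eq, ← mul_assoc, ← mul_assoc] at h
    have h2 : cj x w * (g * r * u) = w * (g * r * u) := by rw [← h]; group
    exact cj_eq_self.1 (mul_right_cancel h2)
  have cxr : Commute x r := by
    have h := cxw.cj a
    rw [xa, wa] at h
    have h2 : Commute (w * r) x := h.symm.cancel_right (vi _).symm
    exact h2.symm.cancel_left cxw
  have g1 : g = 1 := by
    rw [cj_eq_self.2 cxr] at rx
    simpa using rx
  subst g1
  have crc : Commute c r := by simpa [cj_eq_self] using rc
  have cpd : Commute d p := by simpa [cj_eq_self] using pd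
  have cyz : Commute z y := by simpa [cj_eq_self] using yz
  have crq : Commute r q := Commute.of_cj_eq zc crz.symm crc.symm
  have cqz : Commute z q := by
    have h := cyz.cj a
    rw [za, ya] at h
    have h2 : Commute (y * q⁻¹) z := h.symm.cancel_right (cpy.symm.mul_right cpq.inv_right).symm
    simpa using (h2.symm.cancel_left cyz).inv_right
  have cqb : Commute b q := by
    have h := cj_cj bc z
    rw [zb, zc, cj_mul, zb, cj_mul, cj_eq_self.2 (Commute.refl z), mul_left_cancel_iff] at h
    have h2 : cj z (cj b q) = cj z q := by rw [← h, cj_eq_self.2 cqz]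
    exact cj_eq_self.1 (cj_inj.1 h2)
  have cra : Commute a r := by
    have h := cj_cj ab y
    rw [ya, yb, cj_mul, yb, cj_inv, cj_eq_self.2 cqb, cj_mul, ya, cj_mul, cj_mul, cj_inv,
      cj_eq_self.2 cuy, cj_eq_self.2 cuq, mul_assoc, mul_assoc, mul_left_cancel_iff,
      crq.inv_right.eq, mul_left_cancel_iff] at h
    have h2 : cj u (cj a r) = cj u r := by rw [← h, cj_eq_self.2 cur]
    exact cj_eq_self.1 (cj_inj.1 h2)
  have cqy : Commute y q := by
    have h := cyz.cj c
    rw [zc, yc] at h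
    have h2 : Commute (z * q) y := h.cancel_right (crz.symm.mul_right crq).symm
    exact h2.symm.cancel_left cyz.symm
  have cqd : Commute d q := by
    have h := cj_cj ad y
    rw [ya, yd, cj_mul, yd, ya, cj_mul, cj_inv, cj_inv, cj_eq_self.2 (Commute.refl y),
      cj_eq_self.2 cqy, mul_left_cancel_iff, inv_inj] at h
    exact cj_eq_self.1 h
  have cuc : Commute c u := by
    have h := cj_cj cd z
    rw [zc, cjv, zd, cj_mul, cj_mul, zc, zd, cj_eq_self.2 cqd, ← czu.eq, mul_assoc, cuq.eq,
      ← mul_assoc, (czu.symm.mul_right cuq).eq.symm, mul_right_cancel_iff] at h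
    exact cj_eq_self.1 h.symm
  have cxz : Commute x z := by
    have h := cj_cj ab c
    rw [Ac, Bc, cj_mul, cj_mul, Ac, Bc, cj_inv, cj_inv, xb, za, cj_mul,
      cj_mul, cj_inv, cj_inv, cj_mul, cj_eq_self.2 cuc.symm, cj_eq_self.2 cux,
      cj_eq_self.2 czu.symm, cj_eq_self.2 cpu, mul_assoc, mul_assoc, mul_left_cancel_iff,
      ← mul_inv_rev, ← mul_inv_rev, inv_inj, mul_assoc, mul_assoc, cpz.eq, cpx.eq, ← mul_assoc,
      ← mul_assoc, mul_right_cancel_iff] at h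
    exact h
  have cqx : Commute x q := by
    have h := cxz.cj c
    rw [xc, zc] at h
    have h2 : Commute (z * q) x := h.symm.cancel_right (czu.symm.mul_right cuq).symm
    exact h2.symm.cancel_left cxz
  have cqa : Commute a q := by
    have h := cj_cj ac z
    rw [za, zc, cj_mul, cj_mul, zc, za, cj_eq_self.2 cpc, cj_mul, cj_mul, cj_eq_self.2 cxz,
      cj_eq_self.2 cpx.symm, mul_assoc, mul_assoc, mul_left_cancel_iff, ← cpq.eq,
      mul_left_cancel_iff] at h
    have h2 : cj x (cj a q) = cj x q := by rw [← h, cj_eq_self.2 cqx]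
    exact cj_eq_self.1 (cj_inj.1 h2)
  have cxy : Commute x y := by
    have h := cj_cj ad x
    have e1 : cj a (cj d x) = cj y x * r * v⁻¹ := by
      rw [xd, cj_mul, cj_mul, cj_mul, cj_inv, ya, xa, cj_eq_self.2 cra, mul_assoc, mul_assoc,
        mul_assoc x, (vi _).eq]
      have h2 : q * (y⁻¹ * (x * (y * (q⁻¹ * (r * v⁻¹))))) = y⁻¹ * x * y * r * v⁻¹ := by
        have h3 : Commute q (y⁻¹ * x * y) :=
          (cqy.symm.inv_right.mul_right cqx.symm).mul_right cqy.symm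
        rw [show q * (y⁻¹ * (x * (y * (q⁻¹ * (r * v⁻¹))))) = q * (y⁻¹ * x * y) * q⁻¹ * r * v⁻¹ by
          group, h3.eq]
        group
      rw [cj, ← h2]; group
    rw [e1, xa, cj_mul, xd, vv, cj_mul, cj_mul, vv, cj_eq_self.2 cry, mul_right_cancel_iff,
      mul_right_cancel_iff] at h
    have h2 : cj y x = cj y (cj y x) := h
    exact (cj_eq_self.1 (cj_inj.1 h2.symm)).symm
  have cqc : Commute c q := by
    have h := cj_cj ac y
    rw [ya, yc, cj_mul, cj_mul, yc, ya, cj_inv, cj_eq_self.2 cra, cj_mul, cj_mul, cj_inv,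
      cj_eq_self.2 cxy, cj_eq_self.2 cqx, cj_eq_self.2 cxr, mul_assoc, mul_assoc,
      mul_left_cancel_iff, ← crq.inv_right.eq, mul_left_cancel_iff, inv_inj] at h
    exact cj_eq_self.1 h
  refine ⟨⟨cuc.symm, cud⟩, ⟨cpa.symm, cpb.symm, cpc.symm, cpd.symm⟩,
    ⟨cqa.symm, cqb.symm, cqc.symm, cqd.symm⟩, ⟨cra.symm, crb.symm, crc.symm, crd.symm⟩, ?_, ?_⟩
  · rw [xd, mul_assoc y⁻¹, cxy.eq]; group
  · rw [zd, czu.eq]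

/-! ### `N_{3,4}` has class three -/

lemma cj_eq_mul_cmt {Γ : Type*} [Group Γ] (g e : Γ) : cj g e = e * cmt e g := by
  simp [cj, cmt, mul_assoc]

lemma mul_eq_cmt {Γ : Type*} [Group Γ] (g h : Γ) : g * h = h * g * cmt g h := by
  simp [cmt, mul_assoc]

lemma cmt_inv {Γ : Type*} [Group Γ] (g h : Γ) : (cmt g h)⁻¹ = cmt h g := by
  simp [cmt, mul_assoc]

lemma cmt_eq_one {Γ : Type*} [Group Γ] {g h : Γ} : cmt g h = 1 ↔ Commute g h := by
  rw [← cmt_inv, inv_eq_one]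
  constructor
  · intro H; have := mul_eq_cmt h g; rw [H, mul_one] at this; exact this.symm
  · intro H; rw [cmt, mul_assoc, ← H.eq]; group

lemma map_cmt {Γ Δ : Type*} [Group Γ] [Group Δ] (φ : Γ →* Δ) (g h : Γ) :
    φ (cmt g h) = cmt (φ g) (φ h) := by simp [cmt]

namespace N34

/-- `x = [a, c]` -/
def gx : N34 := cmt ga gc
/-- `y = [a, d]` -/
def gy : N34 := cmt ga gd
/-- `z = [b, c]` -/
def gz : N34 := cmt gb gc
/-- `w = [b, d]` -/
def gw : N34 := cmt gb gd
/-- `u = [a, b] = [x, c]` -/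
def gu : N34 := cmt ga gb
/-- `v = [c, d] = [a, x]` -/
def gv : N34 := cmt gc gd
/-- `p = [x, b]` -/
def gp : N34 := cmt gx gb
/-- `q = [a, y]` -/
def gq : N34 := cmt ga gy
/-- `r = [y, b]` -/
def gr : N34 := cmt gy gb

lemma rel_one {t : FreeGroup (Fin 4)} (h : t ∈ N34Rels) : PresentedGroup.mk N34Rels t = 1 :=
  PresentedGroup.one_of_mem h

lemma rels :
    Commute ga gu ∧ Commute gu gb ∧ Commute ga gv ∧ Commute gy gd ∧ Commute gb gz ∧
    Commute gb gv ∧ Commute gc gv ∧ Commute gv gd ∧ cmt gz ga = gp ∧ cmt gw ga = gr ∧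
    gq = cmt gz gc ∧ gv = cmt gb gw ∧ gp = cmt gw gd ∧ gu = cmt gw gc ∧ gr = cmt gy gc ∧
    gu = cmt gx gc ∧ gv = cmt ga gx := by
  obtain ⟨π, hπ, R⟩ : ∃ π : FreeGroup (Fin 4) →* N34,
      (∀ i, π (FreeGroup.of i) = PresentedGroup.of i) ∧ ∀ t ∈ N34Rels, π t = 1 :=
    ⟨PresentedGroup.mk N34Rels, fun _ => rfl, fun _ => rel_one⟩
  simp only [N34Rels, Set.mem_insert_iff, Set.mem_singleton_iff, forall_eq_or_imp, forall_eq,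
    map_cmt, map_mul, map_inv, mul_inv_eq_one, hπ] at R
  obtain ⟨h1, h2, h3, h4, h5, h6, h7, h8, h9, h10, h11, h12, h13, h14, h15, h16, h17⟩ := R
  refine ⟨cmt_eq_one.1 h1, cmt_eq_one.1 h2, cmt_eq_one.1 h3, cmt_eq_one.1 h4, cmt_eq_one.1 h5,
    cmt_eq_one.1 h6, cmt_eq_one.1 h7, cmt_eq_one.1 h8, ?_, ?_, h11, h17.trans h12, h13,
    (h16.trans h14), h15, h16, h17⟩
  · rw [← cmt_inv]; exact inv_eq_of_mul_eq_one_right h9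
  · rw [← cmt_inv]; exact inv_eq_of_mul_eq_one_right h10

lemma mem_of_gens {S : Subgroup N34} (ha : ga ∈ S) (hb : gb ∈ S) (hc : gc ∈ S) (hd : gd ∈ S)
    (g : N34) : g ∈ S := by
  have h : Subgroup.closure (Set.range (PresentedGroup.of (rels := N34Rels))) ≤ S := by
    rw [Subgroup.closure_le]
    rintro _ ⟨i, rfl⟩
    fin_cases i
    exacts [ha, hb, hc, hd]
  rw [PresentedGroup.closure_range_of] at h
  exact h trivial

lemma commute_of_gens {s : N34} (ha : Commute s ga) (hb : Commute s gb) (hc : Commute s gc)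
    (hd : Commute s gd) (g : N34) : Commute s g :=
  (Subgroup.mem_centralizer_singleton_iff.1
    (mem_of_gens (S := Subgroup.centralizer {s}) (Subgroup.mem_centralizer_singleton_iff.2 ha.symm)
      (Subgroup.mem_centralizer_singleton_iff.2 hb.symm)
      (Subgroup.mem_centralizer_singleton_iff.2 hc.symm)
      (Subgroup.mem_centralizer_singleton_iff.2 hd.symm) g)).symm

lemma gv_central (g : N34) : Commute gv g := by
  obtain ⟨-, -, h3, -, -, h6, h7, h8, -⟩ := rels
  exact commute_of_gens h3.symm h6.symm h7.symm h8 g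

/-- All commutators of weight three are central, and the last two entries of the action table. -/
lemma central : (∀ g, Commute gu g) ∧ (∀ g, Commute gp g) ∧ (∀ g, Commute gq g) ∧
    (∀ g, Commute gr g) ∧ cmt gx gd = gr ∧ cmt gz gd = gu := by
  obtain ⟨h1, h2, h3, h4, h5, h6, h7, h8, h9, h10, h11, h12, h13, h14, h15, h16, h17⟩ := rels
  obtain ⟨⟨uc, ud⟩, ⟨pa, pb, pc, pd⟩, ⟨qa, qb, qc, qd⟩, ⟨ra, rb, rc, rd⟩, xd, zd⟩ :=
    central_of_table (a := ga) (b := gb) (c := gc) (d := gd) (x := gx) (y := gy) (z := gz)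
      (w := gw) (u := gu) (v := gv) (p := gp) (q := gq) (r := gr) gv_central
      (mul_eq_cmt _ _) (mul_eq_cmt _ _) (mul_eq_cmt _ _) (mul_eq_cmt _ _) (mul_eq_cmt _ _)
      (mul_eq_cmt _ _)
      (by rw [cj_eq_mul_cmt, h17, cmt_inv]) (by rw [cj_eq_mul_cmt, gp])
      (by rw [cj_eq_mul_cmt, h16])
      (by rw [cj_eq_mul_cmt, gq, cmt_inv]) (by rw [cj_eq_mul_cmt, gr])
      (by rw [cj_eq_mul_cmt, h15]) (cj_eq_self.2 h4.symm)
      (by rw [cj_eq_mul_cmt, h9]) (cj_eq_self.2 h5) (by rw [cj_eq_mul_cmt, h11])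
      (by rw [cj_eq_mul_cmt, h10]) (by rw [cj_eq_mul_cmt, h12, cmt_inv])
      (by rw [cj_eq_mul_cmt, h14]) (by rw [cj_eq_mul_cmt, h13])
      (cj_eq_self.2 h1) (cj_eq_self.2 h2.symm)
  refine ⟨commute_of_gens h1.symm h2 uc ud, commute_of_gens pa pb pc pd,
    commute_of_gens qa qb qc qd, commute_of_gens ra rb rc rd, ?_, ?_⟩
  · simpa [cj_eq_mul_cmt] using xd
  · simpa [cj_eq_mul_cmt] using zd

/-! ### Normal form -/

/-- If `s` is central modulo the normal subgroup `N`, then `⟨s⟩N` is normal. -/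
lemma normal_step {N : Subgroup N34} (hN : N.Normal) {s : N34} (ha : cmt s ga ∈ N)
    (hb : cmt s gb ∈ N) (hc : cmt s gc ∈ N) (hd : cmt s gd ∈ N) :
    (Subgroup.zpowers s ⊔ N).Normal := by
  set π := QuotientGroup.mk' N
  have key : ∀ {g}, cmt s g ∈ N → g ∈ (Subgroup.centralizer {π s}).comap π := by
    intro g hg
    rw [Subgroup.mem_comap, Subgroup.mem_centralizer_singleton_iff]
    have h : π (cmt s g) = 1 := (QuotientGroup.eq_one_iff _).2 hg
    rw [map_cmt, cmt_eq_one] at h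
    exact h.symm.eq
  have hs : π s ∈ Subgroup.center (N34 ⧸ N) := by
    rw [Subgroup.mem_center_iff]
    intro g
    obtain ⟨g, rfl⟩ := QuotientGroup.mk'_surjective N g
    exact Subgroup.mem_centralizer_singleton_iff.1
      (mem_of_gens (key ha) (key hb) (key hc) (key hd) g)
  have hle : Subgroup.zpowers (π s) ≤ Subgroup.center (N34 ⧸ N) := by
    simpa [Subgroup.zpowers_le] using hs
  have hn : (Subgroup.zpowers (π s)).Normal := by
    constructor
    intro n hn g
    have := Subgroup.mem_center_iff.1 (hle hn) g
    rw [this]; simpa using hn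
  have : Subgroup.zpowers s ⊔ N = (Subgroup.zpowers (π s)).comap π := by
    rw [← MonoidHom.map_zpowers, Subgroup.comap_map_eq, QuotientGroup.ker_mk']
  rw [this]
  exact hn.comap π

lemma exists_of_mem_step {N : Subgroup N34} (hN : N.Normal) {s g : N34}
    (hg : g ∈ Subgroup.zpowers s ⊔ N) : ∃ i : ℤ, ∃ n ∈ N, g = s ^ i * n := by
  rw [← SetLike.mem_coe, Subgroup.mul_normal] at hg
  obtain ⟨_, ⟨i, rfl⟩, n, hn, rfl⟩ := hg
  exact ⟨i, n, hn, rfl⟩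

lemma exists_normal_form (g : N34) : ∃ ia ib ic id ix iy iz iw iu iv ip iq ir : ℤ,
    g = ga ^ ia * (gb ^ ib * (gc ^ ic * (gd ^ id * (gx ^ ix * (gy ^ iy * (gz ^ iz * (gw ^ iw *
      (gu ^ iu * (gv ^ iv * (gp ^ ip * (gq ^ iq * gr ^ ir))))))))))) := by
  obtain ⟨h1, h2, h3, h4, h5, h6, h7, h8, h9, h10, h11, h12, h13, h14, h15, h16, h17⟩ := rels
  obtain ⟨uz, pz, qz, rz, xd, zd⟩ := central
  have mem1 : ∀ {s h : N34} {N : Subgroup N34}, Commute s h → cmt s h ∈ N := by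
    intro s h N H; rw [cmt_eq_one.2 H]; exact N.one_mem
  have top : ∀ {s : N34} {N : Subgroup N34}, s ∈ Subgroup.zpowers s ⊔ N :=
    fun {s N} => (le_sup_left : _ ≤ Subgroup.zpowers s ⊔ N) (Subgroup.mem_zpowers s)
  have up : ∀ {s t : N34} {N : Subgroup N34}, t ∈ N → t ∈ Subgroup.zpowers s ⊔ N :=
    fun {s t N} h => (le_sup_right : _ ≤ Subgroup.zpowers s ⊔ N) h
  have sw : ∀ {s t : N34} {N : Subgroup N34}, cmt s t ∈ N → cmt t s ∈ N :=
    fun {s t N} h => by rw [← cmt_inv]; exact N.inv_mem h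
  have n13 : (⊥ : Subgroup N34).Normal := inferInstance
  have n12 := normal_step n13 (s := gr) (mem1 (rz _)) (mem1 (rz _)) (mem1 (rz _)) (mem1 (rz _))
  have n11 := normal_step n12 (s := gq) (mem1 (qz _)) (mem1 (qz _)) (mem1 (qz _)) (mem1 (qz _))
  have n10 := normal_step n11 (s := gp) (mem1 (pz _)) (mem1 (pz _)) (mem1 (pz _)) (mem1 (pz _))
  have n9 := normal_step n10 (s := gv) (mem1 (gv_central _)) (mem1 (gv_central _))
    (mem1 (gv_central _)) (mem1 (gv_central _))
  have n8 := normal_step n9 (s := gu) (mem1 (uz _)) (mem1 (uz _)) (mem1 (uz _)) (mem1 (uz _))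
  set N8 := Subgroup.zpowers gu ⊔ (Subgroup.zpowers gv ⊔ (Subgroup.zpowers gp ⊔
    (Subgroup.zpowers gq ⊔ (Subgroup.zpowers gr ⊔ ⊥)))) with hN8
  have mu : gu ∈ N8 := top
  have mv : gv ∈ N8 := up top
  have mp : gp ∈ N8 := up (up top)
  have mq : gq ∈ N8 := up (up (up top))
  have mr : gr ∈ N8 := up (up (up (up top)))
  have n7 := normal_step n8 (s := gw) (h10 ▸ mr) (sw (h12 ▸ mv)) (h14 ▸ mu) (h13 ▸ mp)
  have n6 := normal_step n7 (s := gz) (up (h9 ▸ mp)) (mem1 h5.symm) (up (h11 ▸ mq))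
    (up (zd ▸ mu))
  have n5 := normal_step n6 (s := gy) (up (up (sw mq))) (up (up mr)) (up (up (h15 ▸ mr)))
    (mem1 h4)
  have n4 := normal_step n5 (s := gx) (up (up (up (sw (h17 ▸ mv))))) (up (up (up mp)))
    (up (up (up (h16 ▸ mu)))) (up (up (up (xd ▸ mr))))
  set N4 := Subgroup.zpowers gx ⊔ (Subgroup.zpowers gy ⊔ (Subgroup.zpowers gz ⊔
    (Subgroup.zpowers gw ⊔ N8))) with hN4
  have mx : gx ∈ N4 := top
  have my : gy ∈ N4 := up top
  have mz : gz ∈ N4 := up (up top)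
  have mw : gw ∈ N4 := up (up (up top))
  have mu' : gu ∈ N4 := up (up (up (up mu)))
  have mv' : gv ∈ N4 := up (up (up (up mv)))
  have n3 := normal_step n4 (s := gd) (sw my) (sw mw) (sw mv') (mem1 (Commute.refl _))
  have n2 := normal_step n3 (s := gc) (up (sw mx)) (up (sw mz)) (mem1 (Commute.refl _)) (up mv')
  have n1 := normal_step n2 (s := gb) (up (up (sw mu'))) (mem1 (Commute.refl _)) (up (up mz))
    (up (up mw))
  have hg := mem_of_gens (S := Subgroup.zpowers ga ⊔ (Subgroup.zpowers gb ⊔ (Subgroup.zpowers gc ⊔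
    (Subgroup.zpowers gd ⊔ N4)))) top (up top) (up (up top)) (up (up (up top))) g
  obtain ⟨ia, g1, m1, rfl⟩ := exists_of_mem_step n1 hg
  obtain ⟨ib, g2, m2, rfl⟩ := exists_of_mem_step n2 m1
  obtain ⟨ic, g3, m3, rfl⟩ := exists_of_mem_step n3 m2
  obtain ⟨id, g4, m4, rfl⟩ := exists_of_mem_step n4 m3
  obtain ⟨ix, g5, m5, rfl⟩ := exists_of_mem_step n5 m4
  obtain ⟨iy, g6, m6, rfl⟩ := exists_of_mem_step n6 m5
  obtain ⟨iz, g7, m7, rfl⟩ := exists_of_mem_step n7 m6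
  obtain ⟨iw, g8, m8, rfl⟩ := exists_of_mem_step n8 m7
  obtain ⟨iu, g9, m9, rfl⟩ := exists_of_mem_step n9 m8
  obtain ⟨iv, g10, m10, rfl⟩ := exists_of_mem_step n10 m9
  obtain ⟨ip, g11, m11, rfl⟩ := exists_of_mem_step n11 m10
  obtain ⟨iq, g12, m12, rfl⟩ := exists_of_mem_step n12 m11
  obtain ⟨ir, g13, m13, rfl⟩ := exists_of_mem_step n13 m12
  rw [Subgroup.mem_bot] at m13
  subst m13
  exact ⟨ia, ib, ic, id, ix, iy, iz, iw, iu, iv, ip, iq, ir, by rw [mul_one]⟩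

end N34

/-! ### The Lie algebra of `N_{3,4}` and its Baker–Campbell–Hausdorff group -/

/-- The rational Lie algebra of `N_{3,4}` in the basis `A, B, C, D` (weight one), `X, Y, Z, W`
(weight two), `U, V, P, Q, R` (weight three, central), carrying the group law given by the
Baker–Campbell–Hausdorff formula. -/
@[ext] structure Mal where
  a : ℚ
  b : ℚ
  c : ℚ
  d : ℚ
  x : ℚ
  y : ℚ
  z : ℚ
  w : ℚ
  u : ℚ
  v : ℚ
  p : ℚ
  q : ℚ
  r : ℚ

namespace Mal

/-- The Lie bracket: `[A,B] = U`, `[C,D] = V`, `[A,C] = X`, `[A,D] = Y`, `[B,C] = Z`, `[B,D] = W`;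
`[X,A] = -V`, `[X,B] = P`, `[X,C] = U`, `[X,D] = R`; `[Y,A] = -Q`, `[Y,B] = [Y,C] = R`;
`[Z,A] = P`, `[Z,C] = Q`, `[Z,D] = U`; `[W,A] = R`, `[W,B] = -V`, `[W,C] = U`, `[W,D] = P`. -/
def br (g h : Mal) : Mal where
  a := 0
  b := 0
  c := 0
  d := 0
  x := g.a * h.c - g.c * h.a
  y := g.a * h.d - g.d * h.a
  z := g.b * h.c - g.c * h.b
  w := g.b * h.d - g.d * h.b
  u := g.a * h.b - g.b * h.a + (g.x * h.c - g.c * h.x) + (g.z * h.d - g.d * h.z)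
    + (g.w * h.c - g.c * h.w)
  v := g.c * h.d - g.d * h.c - (g.x * h.a - g.a * h.x) - (g.w * h.b - g.b * h.w)
  p := g.x * h.b - g.b * h.x + (g.z * h.a - g.a * h.z) + (g.w * h.d - g.d * h.w)
  q := -(g.y * h.a - g.a * h.y) + (g.z * h.c - g.c * h.z)
  r := g.x * h.d - g.d * h.x + (g.y * h.b - g.b * h.y) + (g.y * h.c - g.c * h.y)
    + (g.w * h.a - g.a * h.w)

/-- Addition of the underlying vector space. -/
def add (g h : Mal) : Mal :=
  ⟨g.a + h.a, g.b + h.b, g.c + h.c, g.d + h.d, g.x + h.x, g.y + h.y, g.z + h.z, g.w + h.w,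
    g.u + h.u, g.v + h.v, g.p + h.p, g.q + h.q, g.r + h.r⟩

/-- Scalar multiplication of the underlying vector space. -/
def sc (t : ℚ) (g : Mal) : Mal :=
  ⟨t * g.a, t * g.b, t * g.c, t * g.d, t * g.x, t * g.y, t * g.z, t * g.w,
    t * g.u, t * g.v, t * g.p, t * g.q, t * g.r⟩

instance : One Mal := ⟨⟨0, 0, 0, 0, 0, 0, 0, 0, 0, 0, 0, 0, 0⟩⟩
instance : Inv Mal := ⟨sc (-1)⟩
/-- `g * h = g + h + [g,h]/2 + ([g,[g,h]] + [h,[h,g]])/12`, the Baker–Campbell–Hausdorff product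
in nilpotency class three. -/
instance : Mul Mal :=
  ⟨fun g h => add (add g h) (add (sc (1/2) (br g h))
    (sc (1/12) (add (br g (br g h)) (br h (br h g)))))⟩

lemma mul_def (g h : Mal) : g * h = add (add g h) (add (sc (1/2) (br g h))
    (sc (1/12) (add (br g (br g h)) (br h (br h g))))) := rfl
lemma one_def : (1 : Mal) = ⟨0, 0, 0, 0, 0, 0, 0, 0, 0, 0, 0, 0, 0⟩ := rfl
lemma inv_def (g : Mal) : g⁻¹ = sc (-1) g := rfl

instance : Group Mal where
  mul_assoc g h l := by
    ext <;> simp only [mul_def, add, sc, br] <;> ring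
  one_mul g := by ext <;> simp [mul_def, one_def, add, sc, br]
  mul_one g := by ext <;> simp [mul_def, one_def, add, sc, br]
  inv_mul_cancel g := by
    ext <;> simp only [mul_def, inv_def, one_def, add, sc, br] <;> ring

lemma cmt_eq (g h : Mal) : cmt g h = add (br g h)
    (sc (-1/2) (add (br g (br g h)) (br h (br g h)))) := by
  have key : g * h = h * g * add (br g h)
    (sc (-1/2) (add (br g (br g h)) (br h (br g h)))) := by
    ext <;> simp only [mul_def, add, sc, br] <;> ring
  have : cmt g h = (h * g)⁻¹ * (g * h) := by simp [cmt, mul_assoc]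
  rw [this, key, inv_mul_cancel_left]

lemma cmt_cmt_left (g h l : Mal) : cmt (cmt g h) l = br (br g h) l := by
  simp only [cmt_eq]
  ext <;> simp only [add, sc, br] <;> ring

lemma cmt_cmt_right (g h l : Mal) : cmt g (cmt h l) = br g (br h l) := by
  simp only [cmt_eq]
  ext <;> simp only [add, sc, br] <;> ring

lemma br_eq_of_commute {g h : Mal} (H : g * h = h * g) : br g h = 1 := by
  have h2 : g * h = add (h * g) (br g h) := by
    ext <;> simp only [mul_def, add, sc, br] <;> ring
  rw [H] at h2
  rw [Mal.ext_iff] at h2 ⊢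
  simpa [add, one_def] using h2

lemma npow_eq (g : Mal) (n : ℕ) : g ^ n = sc n g := by
  induction n with
  | zero => ext <;> simp [one_def, sc]
  | succ n ih =>
    rw [pow_succ, ih]
    ext <;> simp only [mul_def, add, sc, br] <;> push_cast <;> ring

lemma zpow_eq (g : Mal) (n : ℤ) : g ^ n = sc n g := by
  obtain ⟨n, rfl | rfl⟩ := n.eq_nat_or_neg
  · rw [zpow_natCast, npow_eq]; simp
  · rw [zpow_neg, zpow_natCast, npow_eq, inv_def]
    ext <;> simp [sc]

lemma sc_sc (s t : ℚ) (g : Mal) : sc s (sc t g) = sc (s * t) g := by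
  ext <;> simp [sc, mul_assoc]

lemma br_sc (s t : ℚ) (g h : Mal) : br (sc s g) (sc t h) = sc (s * t) (br g h) := by
  ext <;> simp only [sc, br] <;> ring

lemma sc_inj {t : ℚ} (ht : t ≠ 0) {g h : Mal} (H : sc t g = sc t h) : g = h := by
  rw [Mal.ext_iff] at H ⊢
  simpa [sc, ht] using H

end Mal

/-! ### The embedding of `N_{3,4}` into its Mal'cev completion -/

namespace Mal

lemma mul_a (g h : Mal) : (g * h).a = g.a + h.a := by simp [mul_def, add, sc, br]
lemma mul_b (g h : Mal) : (g * h).b = g.b + h.b := by simp [mul_def, add, sc, br]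
lemma mul_c (g h : Mal) : (g * h).c = g.c + h.c := by simp [mul_def, add, sc, br]
lemma mul_d (g h : Mal) : (g * h).d = g.d + h.d := by simp [mul_def, add, sc, br]

/-- A threefold bracket only depends on the weight-one parts of its entries. -/
lemma br_br_congr {g h l g' h' l' : Mal}
    (g1 : g.a = g'.a) (g2 : g.b = g'.b) (g3 : g.c = g'.c) (g4 : g.d = g'.d)
    (h1 : h.a = h'.a) (h2 : h.b = h'.b) (h3 : h.c = h'.c) (h4 : h.d = h'.d)
    (l1 : l.a = l'.a) (l2 : l.b = l'.b) (l3 : l.c = l'.c) (l4 : l.d = l'.d) :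
    br (br g h) l = br (br g' h') l' ∧ br l (br g h) = br l' (br g' h') := by
  constructor <;> ext <;> simp [br, g1, g2, g3, g4, h1, h2, h3, h4, l1, l2, l3, l4]

end Mal

namespace N34

open Mal

/-- The images of `a, b, c, d` in the Mal'cev completion: the basis vectors `A, B, C, D`. -/
def gens : Fin 4 → Mal :=
  ![⟨1, 0, 0, 0, 0, 0, 0, 0, 0, 0, 0, 0, 0⟩, ⟨0, 1, 0, 0, 0, 0, 0, 0, 0, 0, 0, 0, 0⟩,
    ⟨0, 0, 1, 0, 0, 0, 0, 0, 0, 0, 0, 0, 0⟩, ⟨0, 0, 0, 1, 0, 0, 0, 0, 0, 0, 0, 0, 0⟩]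

lemma gens_rels : ∀ t ∈ N34Rels, FreeGroup.lift gens t = 1 := by
  simp only [N34Rels, Set.mem_insert_iff, Set.mem_singleton_iff, forall_eq_or_imp, forall_eq,
    map_cmt, map_mul, map_inv, mul_inv_eq_one, FreeGroup.lift_apply_of, cmt_eq]
  refine ⟨?_, ?_, ?_, ?_, ?_, ?_, ?_, ?_, ?_, ?_, ?_, ?_, ?_, ?_, ?_, ?_, ?_⟩ <;>
    simp [gens, br, one_def, add, sc, mul_def]

/-- The homomorphism from `N_{3,4}` to its Mal'cev completion. -/
def φ : N34 →* Mal := PresentedGroup.toGroup gens_rels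

lemma φ_ga : φ ga = ⟨1, 0, 0, 0, 0, 0, 0, 0, 0, 0, 0, 0, 0⟩ := PresentedGroup.toGroup.of _
lemma φ_gb : φ gb = ⟨0, 1, 0, 0, 0, 0, 0, 0, 0, 0, 0, 0, 0⟩ := PresentedGroup.toGroup.of _
lemma φ_gc : φ gc = ⟨0, 0, 1, 0, 0, 0, 0, 0, 0, 0, 0, 0, 0⟩ := PresentedGroup.toGroup.of _
lemma φ_gd : φ gd = ⟨0, 0, 0, 1, 0, 0, 0, 0, 0, 0, 0, 0, 0⟩ := PresentedGroup.toGroup.of _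

lemma φ_gx : φ gx = ⟨0, 0, 0, 0, 1, 0, 0, 0, 1/2, -1/2, 0, 0, 0⟩ := by
  rw [gx, map_cmt, φ_ga, φ_gc, cmt_eq]; simp [br, add, sc]; norm_num
lemma φ_gy : φ gy = ⟨0, 0, 0, 0, 0, 1, 0, 0, 0, 0, 0, -1/2, 0⟩ := by
  rw [gy, map_cmt, φ_ga, φ_gd, cmt_eq]; simp [br, add, sc]
lemma φ_gz : φ gz = ⟨0, 0, 0, 0, 0, 0, 1, 0, 0, 0, 0, 1/2, 0⟩ := by
  rw [gz, map_cmt, φ_gb, φ_gc, cmt_eq]; simp [br, add, sc]; norm_num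
lemma φ_gw : φ gw = ⟨0, 0, 0, 0, 0, 0, 0, 1, 0, -1/2, 1/2, 0, 0⟩ := by
  rw [gw, map_cmt, φ_gb, φ_gd, cmt_eq]; simp [br, add, sc]; norm_num
lemma φ_gu : φ gu = ⟨0, 0, 0, 0, 0, 0, 0, 0, 1, 0, 0, 0, 0⟩ := by
  rw [gu, map_cmt, φ_ga, φ_gb, cmt_eq]; simp [br, add, sc]
lemma φ_gv : φ gv = ⟨0, 0, 0, 0, 0, 0, 0, 0, 0, 1, 0, 0, 0⟩ := by
  rw [gv, map_cmt, φ_gc, φ_gd, cmt_eq]; simp [br, add, sc]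
lemma φ_gp : φ gp = ⟨0, 0, 0, 0, 0, 0, 0, 0, 0, 0, 1, 0, 0⟩ := by
  rw [gp, gx, map_cmt, map_cmt, φ_ga, φ_gb, φ_gc, cmt_cmt_left]; simp [br]
lemma φ_gq : φ gq = ⟨0, 0, 0, 0, 0, 0, 0, 0, 0, 0, 0, 1, 0⟩ := by
  rw [gq, gy, map_cmt, map_cmt, φ_ga, φ_gd, cmt_cmt_right]; simp [br]
lemma φ_gr : φ gr = ⟨0, 0, 0, 0, 0, 0, 0, 0, 0, 0, 0, 0, 1⟩ := by
  rw [gr, gy, map_cmt, map_cmt, φ_ga, φ_gb, φ_gd, cmt_cmt_left]; simp [br]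

lemma φ_central_form (iu iv ip iq ir : ℤ) :
    φ (gu ^ iu * (gv ^ iv * (gp ^ ip * (gq ^ iq * gr ^ ir)))) =
      ⟨0, 0, 0, 0, 0, 0, 0, 0, iu, iv, ip, iq, ir⟩ := by
  simp only [map_mul, map_zpow, zpow_eq, φ_gu, φ_gv, φ_gp, φ_gq, φ_gr]
  ext <;> simp [mul_def, add, sc, br]

lemma φ_weight_two_form (ix iy iz iw : ℤ) (u v p q r : ℚ) (g : Mal)
    (hg : g = φ gx ^ ix * (φ gy ^ iy * (φ gz ^ iz * (φ gw ^ iw *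
      ⟨0, 0, 0, 0, 0, 0, 0, 0, u, v, p, q, r⟩)))) :
    g.x = ix ∧ g.y = iy ∧ g.z = iz ∧ g.w = iw := by
  subst hg
  simp only [zpow_eq, φ_gx, φ_gy, φ_gz, φ_gw]
  simp [mul_def, add, sc, br]

/-- An element whose image has weight three is a product of powers of the central commutators. -/
lemma exists_central_form {g : N34} (ha : (φ g).a = 0) (hb : (φ g).b = 0) (hc : (φ g).c = 0)
    (hd : (φ g).d = 0) (hx : (φ g).x = 0) (hy : (φ g).y = 0) (hz : (φ g).z = 0)
    (hw : (φ g).w = 0) :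
    ∃ iu iv ip iq ir : ℤ, g = gu ^ iu * (gv ^ iv * (gp ^ ip * (gq ^ iq * gr ^ ir))) := by
  obtain ⟨ia, ib, ic, id, ix, iy, iz, iw, iu, iv, ip, iq, ir, rfl⟩ := exists_normal_form g
  have e := φ_central_form iu iv ip iq ir
  set s := gu ^ iu * (gv ^ iv * (gp ^ ip * (gq ^ iq * gr ^ ir))) with hs
  simp only [map_mul, map_zpow, e, mul_a, mul_b, mul_c, mul_d, zpow_eq, sc,
    φ_ga, φ_gb, φ_gc, φ_gd, φ_gx, φ_gy, φ_gz, φ_gw] at ha hb hc hd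
  simp only [mul_zero, mul_one, add_zero, zero_add, Int.cast_eq_zero] at ha hb hc hd
  subst ha hb hc hd
  simp only [zpow_zero, one_mul] at hx hy hz hw ⊢
  obtain ⟨ex, ey, ez, ew⟩ := φ_weight_two_form ix iy iz iw iu iv ip iq ir
    (φ (gx ^ ix * (gy ^ iy * (gz ^ iz * (gw ^ iw * s))))) (by simp only [map_mul, map_zpow, e])
  rw [hx, eq_comm, Int.cast_eq_zero] at ex
  rw [hy, eq_comm, Int.cast_eq_zero] at ey
  rw [hz, eq_comm, Int.cast_eq_zero] at ez
  rw [hw, eq_comm, Int.cast_eq_zero] at ew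
  subst ex ey ez ew
  simp only [zpow_zero, one_mul]
  exact ⟨iu, iv, ip, iq, ir, hs⟩

lemma φ_injective : Function.Injective φ := by
  rw [injective_iff_map_eq_one]
  intro g hg
  obtain ⟨iu, iv, ip, iq, ir, rfl⟩ := exists_central_form (g := g) (by rw [hg]; rfl)
    (by rw [hg]; rfl) (by rw [hg]; rfl) (by rw [hg]; rfl) (by rw [hg]; rfl) (by rw [hg]; rfl)
    (by rw [hg]; rfl) (by rw [hg]; rfl)
  rw [φ_central_form, one_def] at hg
  simp only [Mal.mk.injEq, true_and, Int.cast_eq_zero] at hg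
  obtain ⟨rfl, rfl, rfl, rfl, rfl⟩ := hg
  simp

/-- Commutators have no weight-one part. -/
lemma weight_one_of_mem_commutator {g : N34} (hg : g ∈ commutator N34) :
    (φ g).a = 0 ∧ (φ g).b = 0 ∧ (φ g).c = 0 ∧ (φ g).d = 0 := by
  let ψ : Mal →* Multiplicative (ℚ × ℚ × ℚ × ℚ) :=
    { toFun := fun g => Multiplicative.ofAdd (g.a, g.b, g.c, g.d)
      map_one' := rfl
      map_mul' := fun g h => by rw [mul_a, mul_b, mul_c, mul_d]; rfl }
  have h := Abelianization.commutator_subset_ker (ψ.comp φ) hg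
  rw [MonoidHom.mem_ker] at h
  have h' : ((φ g).a, (φ g).b, (φ g).c, (φ g).d) = ((0 : ℚ), (0 : ℚ), (0 : ℚ), (0 : ℚ)) := h
  simpa using h'

/-- Coordinates of an element known modulo the commutator subgroup. -/
lemma weight_one_of_congr {g : N34} {i1 i2 i3 i4 : ℤ}
    (hg : g * (ga ^ i1 * gb ^ i2 * gc ^ i3 * gd ^ i4)⁻¹ ∈ commutator N34) :
    (φ g).a = i1 ∧ (φ g).b = i2 ∧ (φ g).c = i3 ∧ (φ g).d = i4 := by
  obtain ⟨h1, h2, h3, h4⟩ := weight_one_of_mem_commutator hg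
  simp only [map_mul, map_inv, map_zpow, zpow_eq, φ_ga, φ_gb, φ_gc, φ_gd] at h1 h2 h3 h4
  simp only [inv_def, sc, mul_a, mul_b, mul_c, mul_d] at h1 h2 h3 h4
  refine ⟨?_, ?_, ?_, ?_⟩ <;> linarith

/-- An element commuting with nontrivial powers of `a` and `c` is central of weight three. -/
lemma exists_central_form_of_commute {g : N34} {m k : ℕ} (hm : 0 < m) (hk : 0 < k)
    (ha : g * ga ^ m = ga ^ m * g) (hc : g * gc ^ k = gc ^ k * g) :
    ∃ iu iv ip iq ir : ℤ, g = gu ^ iu * (gv ^ iv * (gp ^ ip * (gq ^ iq * gr ^ ir))) := by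
  have ea := congrArg φ ha
  have ec := congrArg φ hc
  rw [map_mul, map_mul] at ea ec
  replace ea := br_eq_of_commute ea
  replace ec := br_eq_of_commute ec
  simp only [map_pow, npow_eq, φ_ga, φ_gc, sc, br, one_def, Mal.mk.injEq] at ea ec
  have hm' : (m : ℚ) ≠ 0 := by exact_mod_cast hm.ne'
  have hk' : (k : ℚ) ≠ 0 := by exact_mod_cast hk.ne'
  simp [hm'] at ea
  simp [hk'] at ec
  grind [exists_central_form]

end N34

/-! ### Rigidity of the defining relations -/

namespace Mal

/-- A column `(s, t)` proportional to both columns of a nonsingular `2 × 2` matrix vanishes. -/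
lemma columns_eq_zero {a1 a2 b1 b2 s t : ℚ} (h : a1 * b2 - a2 * b1 ≠ 0)
    (h1 : a1 * t - s * b1 = 0) (h2 : a2 * t - s * b2 = 0) : s = 0 ∧ t = 0 := by
  constructor
  · apply (mul_eq_zero.1 (_ : (a1 * b2 - a2 * b1) * s = 0)).resolve_left h
    linear_combination a2 * h1 - a1 * h2
  · apply (mul_eq_zero.1 (_ : (a1 * b2 - a2 * b1) * t = 0)).resolve_left h
    linear_combination b2 * h1 - b1 * h2

/-- Four vectors with linearly independent weight-one parts which satisfy the defining relations of
the Lie algebra have the same weight-one parts as the basis `A, B, C, D`. Since `[α, β]` and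
`[γ, δ]` have weight three, the planes spanned by `α, β` and by `γ, δ` are `⟨A, B⟩` and `⟨C, D⟩` in
one of the two orders; `r1` and `r2` make the matrix monomial, and the others exclude the swap and
force the entries to be `1`. -/
lemma rigid {α β γ δ : Mal}
    (hx : (br α β).x = 0) (hy : (br α β).y = 0) (hz : (br α β).z = 0) (hw : (br α β).w = 0)
    (hu : (br α β).u = (br (br α γ) γ).u)
    (kx : (br γ δ).x = 0) (ky : (br γ δ).y = 0) (kz : (br γ δ).z = 0) (kw : (br γ δ).w = 0)
    (r1 : br (br α δ) δ = 1) (r2 : br β (br β γ) = 1)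
    (r5 : br α (br α δ) = br (br β γ) γ) (r6 : br α (br α γ) = br β (br β δ))
    (r7 : br (br α γ) β = br (br β δ) δ) (r9 : br (br α δ) β = br (br α δ) γ)
    (hdet : (α.a * β.b - α.b * β.a) * (γ.c * δ.d - γ.d * δ.c)
      - (α.a * β.c - α.c * β.a) * (γ.b * δ.d - γ.d * δ.b)
      + (α.a * β.d - α.d * β.a) * (γ.b * δ.c - γ.c * δ.b)
      + (α.b * β.c - α.c * β.b) * (γ.a * δ.d - γ.d * δ.a)
      - (α.b * β.d - α.d * β.b) * (γ.a * δ.c - γ.c * δ.a)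
      + (α.c * β.d - α.d * β.c) * (γ.a * δ.b - γ.b * δ.a) ≠ 0) :
    (α.a = 1 ∧ α.b = 0 ∧ α.c = 0 ∧ α.d = 0) ∧ (β.a = 0 ∧ β.b = 1 ∧ β.c = 0 ∧ β.d = 0) ∧
    (γ.a = 0 ∧ γ.b = 0 ∧ γ.c = 1 ∧ γ.d = 0) ∧ (δ.a = 0 ∧ δ.b = 0 ∧ δ.c = 0 ∧ δ.d = 1) := by
  simp only [br] at hx hy hz hw kx ky kz kw
  have hdet' : (α.a * β.b - α.b * β.a) * (γ.c * δ.d - γ.d * δ.c)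
      + (α.c * β.d - α.d * β.c) * (γ.a * δ.b - γ.b * δ.a) ≠ 0 := by
    rw [hx, hy, hz, hw] at hdet; simpa using hdet
  by_cases hcase : (α.a * β.b - α.b * β.a) * (γ.c * δ.d - γ.d * δ.c) = 0
  · -- `α, β ∈ ⟨C, D⟩` and `γ, δ ∈ ⟨A, B⟩`: impossible
    exfalso
    rw [hcase, zero_add] at hdet'
    obtain ⟨h1, h2⟩ := mul_ne_zero_iff.1 hdet'
    obtain ⟨a1, b1⟩ := columns_eq_zero (s := α.a) (t := β.a) h1 (by linarith) (by linarith)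
    obtain ⟨a2, b2⟩ := columns_eq_zero (s := α.b) (t := β.b) h1 (by linarith) (by linarith)
    obtain ⟨c3, d3⟩ := columns_eq_zero (s := γ.c) (t := δ.c) h2 (by linarith) (by linarith)
    obtain ⟨c4, d4⟩ := columns_eq_zero (s := γ.d) (t := δ.d) h2 (by linarith) (by linarith)
    clear hdet hdet' hcase hx hy hz hw kx ky kz kw hu r5 r7 r9
    simp only [br, one_def, a1, b1, a2, b2, c3, d3, c4, d4, Mal.mk.injEq] at r1 r2 r6
    obtain ⟨-, -, -, -, -, -, -, -, r1u, r1v, r1p, r1q, r1r⟩ := r1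
    obtain ⟨-, -, -, -, -, -, -, -, r2u, r2v, r2p, r2q, r2r⟩ := r2
    obtain ⟨-, -, -, -, -, -, -, -, r6u, r6v, r6p, r6q, r6r⟩ := r6
    have e1 : α.d * δ.a = 0 := by
      have : (α.d * δ.a) * δ.a = 0 := by linear_combination r1q
      grind
    have e2 : δ.a = 0 := by
      by_contra h
      have ad : α.d = 0 := by grind
      have : α.c * δ.a ^ 2 = 0 := by rw [ad] at r1v; linear_combination r1v
      have ac : α.c = 0 := by simpa [h] using this
      rw [ad, ac] at h1; simp at h1
    have db : δ.b ≠ 0 := by intro h; rw [h, e2] at h2; simp at h2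
    have ad : α.d = 0 := by
      have : α.d * δ.b ^ 2 = 0 := by rw [e2] at r1v; linear_combination r1v
      simpa [db] using this
    have bd : β.d ≠ 0 := by intro h; rw [h, ad] at h1; simp at h1
    have ac : α.c ≠ 0 := by intro h; rw [h, ad] at h1; simp at h1
    have ga : γ.a ≠ 0 := by intro h; rw [h, e2] at h2; simp at h2
    rw [ad, e2] at r6u
    have gb : γ.b = 0 := by
      have : β.d ^ 2 * γ.b = 0 := by linear_combination r2p
      simpa [bd] using this
    have bc : β.c = 0 := by
      have : β.c ^ 2 * γ.a = 0 := by rw [gb] at r2u; linear_combination r2u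
      simpa [ga] using this
    have : α.c ^ 2 * γ.a = 0 := by rw [bc] at r6u; linear_combination r6u
    simp [ac, ga] at this
  · -- `α, β ∈ ⟨A, B⟩` and `γ, δ ∈ ⟨C, D⟩`
    obtain ⟨h1, h2⟩ := mul_ne_zero_iff.1 hcase
    obtain ⟨a3, b3⟩ := columns_eq_zero (s := α.c) (t := β.c) h1 (by linarith) (by linarith)
    obtain ⟨a4, b4⟩ := columns_eq_zero (s := α.d) (t := β.d) h1 (by linarith) (by linarith)
    obtain ⟨c1, d1⟩ := columns_eq_zero (s := γ.a) (t := δ.a) h2 (by linarith) (by linarith)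
    obtain ⟨c2, d2⟩ := columns_eq_zero (s := γ.b) (t := δ.b) h2 (by linarith) (by linarith)
    clear hdet hdet' hcase hx hy hz hw kx ky kz kw
    simp only [br, one_def, a3, b3, a4, b4, c1, d1, c2, d2, Mal.mk.injEq] at r1 r2 r5 r6 r7 r9 hu
    obtain ⟨-, -, -, -, -, -, -, -, r1u, r1v, r1p, r1q, r1r⟩ := r1
    obtain ⟨-, -, -, -, -, -, -, -, r2u, r2v, r2p, r2q, r2r⟩ := r2
    obtain ⟨-, -, -, -, -, -, -, -, -, -, -, r5q, -⟩ := r5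
    obtain ⟨-, -, -, -, -, -, -, -, -, r6v, -, -, -⟩ := r6
    obtain ⟨-, -, -, -, -, -, -, -, -, -, r7p, -, -⟩ := r7
    obtain ⟨-, -, -, -, -, -, -, -, -, -, -, -, r9r⟩ := r9
    have ab : α.b = 0 := by
      by_contra h
      have e1 : α.b * δ.d ^ 2 = 0 := by linear_combination r1p
      have e2 : α.b * δ.c ^ 2 = 0 := by linear_combination r1q
      have e3 : δ.d = 0 := by simpa [h] using e1
      have e4 : δ.c = 0 := by simpa [h] using e2
      rw [e3, e4] at h2; simp at h2
    have aa : α.a ≠ 0 := by intro h; rw [h, ab] at h1; simp at h1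
    have bb : β.b ≠ 0 := by intro h; rw [h, ab] at h1; simp at h1
    have dc : δ.c = 0 := by
      have : α.a * δ.c ^ 2 = 0 := by rw [ab] at r1u; linear_combination r1u
      simpa [aa] using this
    have dd : δ.d ≠ 0 := by intro h; rw [h, dc] at h2; simp at h2
    have cc : γ.c ≠ 0 := by intro h; rw [h, dc] at h2; simp at h2
    have ba : β.a = 0 := by
      have : β.a * β.b * γ.c = 0 := by linear_combination (-1/2) * r2p
      simpa [bb, cc] using this
    have gd : γ.d = 0 := by
      have : β.b ^ 2 * γ.d = 0 := by rw [ba] at r2v; linear_combination r2v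
      simpa [bb] using this
    simp only [ab, dc, ba, gd] at hu r5q r6v r7p r9r
    have e9 : β.b = γ.c := by
      apply mul_left_cancel₀ (mul_ne_zero aa dd); linear_combination r9r
    have eu : γ.c = 1 := by
      apply mul_left_cancel₀ (mul_ne_zero aa cc)
      rw [e9] at hu; linear_combination -hu
    rw [eu] at e9
    rw [e9, eu] at r5q r6v r7p
    have e6 : δ.d = α.a ^ 2 := by linear_combination -r6v
    have e7 : α.a = δ.d ^ 2 := by linear_combination r7p
    have e5 : α.a ^ 2 * δ.d = 1 := by linear_combination r5q
    have e8 : α.a = 1 := by rw [← e6] at e5; rw [e7]; linear_combination e5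
    have e10 : δ.d = 1 := by rw [e6, e8]; norm_num
    exact ⟨⟨e8, ab, a3, a4⟩, ⟨ba, e9, b3, b4⟩, ⟨c1, c2, eu, gd⟩, ⟨d1, d2, dc, e10⟩⟩

end Mal

/-! ### Virtual endomorphisms -/

namespace Mal

lemma sc_one' (g : Mal) : sc 1 g = g := by ext <;> simp [sc]

lemma sc_eq_one {t : ℚ} (ht : t ≠ 0) {g : Mal} (H : sc t g = 1) : g = 1 := by
  apply sc_inj ht
  rw [H]; ext <;> simp [sc, one_def]

lemma sc_inj' {s t : ℚ} (hst : s = t) (hs : s ≠ 0) {g h : Mal} (H : sc s g = sc t h) : g = h :=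
  sc_inj hs (hst ▸ H)

lemma map_cmt_left {Γ : Type*} [Group Γ] (ψ : Γ →* Mal) {g h l : Γ} {s₁ s₂ s₃ : ℚ}
    {g' h' l' : Mal} (hg : ψ g = sc s₁ g') (hh : ψ h = sc s₂ h') (hl : ψ l = sc s₃ l') (i : ℕ) :
    ψ (cmt (cmt g h) l ^ i) = sc (i * (s₁ * s₂ * s₃)) (br (br g' h') l') := by
  rw [map_pow, map_cmt, map_cmt, cmt_cmt_left, hg, hh, hl, br_sc, br_sc, npow_eq, sc_sc]

lemma map_cmt_right {Γ : Type*} [Group Γ] (ψ : Γ →* Mal) {g h l : Γ} {s₁ s₂ s₃ : ℚ}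
    {g' h' l' : Mal} (hl : ψ l = sc s₃ l') (hg : ψ g = sc s₁ g') (hh : ψ h = sc s₂ h') (i : ℕ) :
    ψ (cmt l (cmt g h) ^ i) = sc (i * (s₃ * (s₁ * s₂))) (br l' (br g' h')) := by
  rw [map_pow, map_cmt, map_cmt, cmt_cmt_right, hg, hh, hl, br_sc, br_sc, npow_eq, sc_sc]

/-- If a group commutator has weight three, it is given by the Lie bracket. -/
lemma br_of_cmt {s t : ℚ} (hs : s ≠ 0) (ht : t ≠ 0) {g h e : Mal}
    (H : cmt (sc s g) (sc t h) = sc (s * t) e)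
    (ex : e.x = 0) (ey : e.y = 0) (ez : e.z = 0) (ew : e.w = 0) :
    (br g h).x = 0 ∧ (br g h).y = 0 ∧ (br g h).z = 0 ∧ (br g h).w = 0 ∧ (br g h).u = e.u := by
  have hst : s * t ≠ 0 := mul_ne_zero hs ht
  rw [cmt_eq, br_sc] at H
  have hx := congrArg Mal.x H
  have hy := congrArg Mal.y H
  have hz := congrArg Mal.z H
  have hw := congrArg Mal.w H
  have hu := congrArg Mal.u H
  generalize hb : br g h = b at *
  have ba : b.a = 0 := by rw [← hb]; rfl
  have bb : b.b = 0 := by rw [← hb]; rfl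
  have bc : b.c = 0 := by rw [← hb]; rfl
  have bd : b.d = 0 := by rw [← hb]; rfl
  simp [add, sc, br, ba, bb, bc, bd, ex, hs, ht] at hx
  simp [add, sc, br, ba, bb, bc, bd, ey, hs, ht] at hy
  simp [add, sc, br, ba, bb, bc, bd, ez, hs, ht] at hz
  simp [add, sc, br, ba, bb, bc, bd, ew, hs, ht] at hw
  simp [add, sc, br, ba, bb, bc, bd, hx, hy, hz, hw, hs, ht] at hu
  exact ⟨hx, hy, hz, hw, hu⟩

end Mal

namespace N34

open Mal

/-- Laplace expansion along the first two rows. -/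
lemma det_four (M : Matrix (Fin 4) (Fin 4) ℤ) : M.det =
      (M 0 0 * M 1 1 - M 0 1 * M 1 0) * (M 2 2 * M 3 3 - M 2 3 * M 3 2)
      - (M 0 0 * M 1 2 - M 0 2 * M 1 0) * (M 2 1 * M 3 3 - M 2 3 * M 3 1)
      + (M 0 0 * M 1 3 - M 0 3 * M 1 0) * (M 2 1 * M 3 2 - M 2 2 * M 3 1)
      + (M 0 1 * M 1 2 - M 0 2 * M 1 1) * (M 2 0 * M 3 3 - M 2 3 * M 3 0)
      - (M 0 1 * M 1 3 - M 0 3 * M 1 1) * (M 2 0 * M 3 2 - M 2 2 * M 3 0)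
      + (M 0 2 * M 1 3 - M 0 3 * M 1 2) * (M 2 0 * M 3 1 - M 2 1 * M 3 0) := by
  rw [Matrix.det_succ_row_zero, Fin.sum_univ_four]
  simp only [Matrix.det_fin_three, Matrix.submatrix_apply]
  simp [Fin.succAbove, Fin.lt_def]
  ring

/-- A virtual endomorphism with nonsingular exponent matrix induces the identity on the
abelianization: the images of `aᵐ, bⁿ, cᵏ, dʲ` have weight-one parts `mA, nB, kC, jD`. -/
lemma exponents {H : Subgroup N34} (f : ↥H →* N34) {m n k j : ℕ} (hm : 0 < m) (hn : 0 < n)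
    (hk : 0 < k) (hj : 0 < j) {A B C D : ↥H}
    (hA : (A : N34) = ga ^ m) (hB : (B : N34) = gb ^ n) (hC : (C : N34) = gc ^ k)
    (hD : (D : N34) = gd ^ j) {Nf : Matrix (Fin 4) (Fin 4) ℤ}
    (hfa : f A * (ga ^ Nf 0 0 * gb ^ Nf 0 1 * gc ^ Nf 0 2 * gd ^ Nf 0 3)⁻¹ ∈ commutator N34)
    (hfb : f B * (ga ^ Nf 1 0 * gb ^ Nf 1 1 * gc ^ Nf 1 2 * gd ^ Nf 1 3)⁻¹ ∈ commutator N34)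
    (hfc : f C * (ga ^ Nf 2 0 * gb ^ Nf 2 1 * gc ^ Nf 2 2 * gd ^ Nf 2 3)⁻¹ ∈ commutator N34)
    (hfd : f D * (ga ^ Nf 3 0 * gb ^ Nf 3 1 * gc ^ Nf 3 2 * gd ^ Nf 3 3)⁻¹ ∈ commutator N34)
    (hdet : Nf.det ≠ 0) :
    ((φ (f A)).a = m ∧ (φ (f A)).b = 0 ∧ (φ (f A)).c = 0 ∧ (φ (f A)).d = 0) ∧
    ((φ (f B)).a = 0 ∧ (φ (f B)).b = n ∧ (φ (f B)).c = 0 ∧ (φ (f B)).d = 0) ∧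
    ((φ (f C)).a = 0 ∧ (φ (f C)).b = 0 ∧ (φ (f C)).c = k ∧ (φ (f C)).d = 0) ∧
    ((φ (f D)).a = 0 ∧ (φ (f D)).b = 0 ∧ (φ (f D)).c = 0 ∧ (φ (f D)).d = j) := by
  have m0 : (m : ℚ) ≠ 0 := by exact_mod_cast hm.ne'
  have n0 : (n : ℚ) ≠ 0 := by exact_mod_cast hn.ne'
  have k0 : (k : ℚ) ≠ 0 := by exact_mod_cast hk.ne'
  have j0 : (j : ℚ) ≠ 0 := by exact_mod_cast hj.ne'
  obtain ⟨F, hF⟩ : ∃ F : ↥H →* Mal, F = φ.comp f := ⟨_, rfl⟩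
  obtain ⟨ι, hι⟩ : ∃ ι : ↥H →* Mal, ι = φ.comp H.subtype := ⟨_, rfl⟩
  have transfer : ∀ {s t : ↥H}, ι s = ι t → F s = F t := by
    intro s t h
    rw [hι] at h
    rw [Subtype.ext (φ_injective h)]
  have iA : ι A = sc m (φ ga) := by rw [hι, ← npow_eq, ← map_pow, ← hA]; rfl
  have iB : ι B = sc n (φ gb) := by rw [hι, ← npow_eq, ← map_pow, ← hB]; rfl
  have iC : ι C = sc k (φ gc) := by rw [hι, ← npow_eq, ← map_pow, ← hC]; rfl
  have iD : ι D = sc j (φ gd) := by rw [hι, ← npow_eq, ← map_pow, ← hD]; rfl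
  -- the rational vectors which the Lie algebra map induced by `f` assigns to `A, B, C, D`
  obtain ⟨α, hα⟩ : ∃ α, α = sc (m : ℚ)⁻¹ (F A) := ⟨_, rfl⟩
  obtain ⟨β, hβ⟩ : ∃ β, β = sc (n : ℚ)⁻¹ (F B) := ⟨_, rfl⟩
  obtain ⟨γ, hγ⟩ : ∃ γ, γ = sc (k : ℚ)⁻¹ (F C) := ⟨_, rfl⟩
  obtain ⟨δ, hδ⟩ : ∃ δ, δ = sc (j : ℚ)⁻¹ (F D) := ⟨_, rfl⟩
  have FA : F A = sc m α := by rw [hα, sc_sc, mul_inv_cancel₀ m0, sc_one']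
  have FB : F B = sc n β := by rw [hβ, sc_sc, mul_inv_cancel₀ n0, sc_one']
  have FC : F C = sc k γ := by rw [hγ, sc_sc, mul_inv_cancel₀ k0, sc_one']
  have FD : F D = sc j δ := by rw [hδ, sc_sc, mul_inv_cancel₀ j0, sc_one']
  have r1 : br (br α δ) δ = 1 := by
    have h : ι (cmt (cmt A D) D ^ 1) = ι 1 := by
      rw [map_cmt_left ι iA iD iD, map_one, φ_ga, φ_gd]; simp [br, sc, one_def]
    have h' := transfer h
    rw [map_cmt_left F FA FD FD, map_one] at h'
    exact sc_eq_one (by positivity) h'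
  have r2 : br β (br β γ) = 1 := by
    have h : ι (cmt B (cmt B C) ^ 1) = ι 1 := by
      rw [map_cmt_right ι iB iB iC, map_one, φ_gb, φ_gc]; simp [br, sc, one_def]
    have h' := transfer h
    rw [map_cmt_right F FB FB FC, map_one] at h'
    exact sc_eq_one (by positivity) h'
  have r5 : br α (br α δ) = br (br β γ) γ := by
    have h : ι (cmt A (cmt A D) ^ (n * k * k)) = ι (cmt (cmt B C) C ^ (m * m * j)) := by
      rw [map_cmt_right ι iA iA iD, map_cmt_left ι iB iC iC, φ_ga, φ_gb, φ_gc, φ_gd]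
      simp [br, sc]; ring
    have h' := transfer h
    rw [map_cmt_right F FA FA FD, map_cmt_left F FB FC FC] at h'
    exact sc_inj' (by push_cast; ring) (by positivity) h'
  have r6 : br α (br α γ) = br β (br β δ) := by
    have h : ι (cmt A (cmt A C) ^ (n * n * j)) = ι (cmt B (cmt B D) ^ (m * m * k)) := by
      rw [map_cmt_right ι iA iA iC, map_cmt_right ι iB iB iD, φ_ga, φ_gb, φ_gc, φ_gd]
      simp [br, sc]; ring
    have h' := transfer h
    rw [map_cmt_right F FA FA FC, map_cmt_right F FB FB FD] at h'
    exact sc_inj' (by push_cast; ring) (by positivity) h'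
  have r7 : br (br α γ) β = br (br β δ) δ := by
    have h : ι (cmt (cmt A C) B ^ (j * j)) = ι (cmt (cmt B D) D ^ (m * k)) := by
      rw [map_cmt_left ι iA iC iB, map_cmt_left ι iB iD iD, φ_ga, φ_gb, φ_gc, φ_gd]
      simp [br, sc]; ring
    have h' := transfer h
    rw [map_cmt_left F FA FC FB, map_cmt_left F FB FD FD] at h'
    exact sc_inj' (by push_cast; ring) (by positivity) h'
  have r9 : br (br α δ) β = br (br α δ) γ := by
    have h : ι (cmt (cmt A D) B ^ k) = ι (cmt (cmt A D) C ^ n) := by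
      rw [map_cmt_left ι iA iD iB, map_cmt_left ι iA iD iC, φ_ga, φ_gb, φ_gc, φ_gd]
      simp [br, sc]; ring
    have h' := transfer h
    rw [map_cmt_left F FA FD FB, map_cmt_left F FA FD FC] at h'
    exact sc_inj' (by ring) (by positivity) h'
  have r10 : cmt (sc m α) (sc n β) = sc (m * n) (br (br α γ) γ) := by
    have h : ι (cmt A B ^ (k * k)) = ι (cmt (cmt A C) C ^ n) := by
      rw [map_cmt_left ι iA iC iC, map_pow, map_cmt, iA, iB, npow_eq, cmt_eq, φ_ga, φ_gb, φ_gc]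
      simp [br, sc, add]; ring
    have h' := transfer h
    rw [map_cmt_left F FA FC FC, map_pow, map_cmt, FA, FB, npow_eq] at h'
    apply sc_inj (t := ((k * k : ℕ) : ℚ)) (by positivity)
    rw [h', sc_sc]
    congr 1; push_cast; ring
  have r11 : cmt (sc k γ) (sc j δ) = sc (k * j) (br α (br α γ)) := by
    have h : ι (cmt C D ^ (m * m)) = ι (cmt A (cmt A C) ^ j) := by
      rw [map_cmt_right ι iA iA iC, map_pow, map_cmt, iC, iD, npow_eq, cmt_eq, φ_ga, φ_gc, φ_gd]
      simp [br, sc, add]; ring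
    have h' := transfer h
    rw [map_cmt_right F FA FA FC, map_pow, map_cmt, FC, FD, npow_eq] at h'
    apply sc_inj (t := ((m * m : ℕ) : ℚ)) (by positivity)
    rw [h', sc_sc]
    congr 1; push_cast; ring
  obtain ⟨hx, hy, hz, hw, hu⟩ := br_of_cmt m0 n0 r10 (by simp [br]) (by simp [br]) (by simp [br])
    (by simp [br])
  obtain ⟨kx, ky, kz, kw, -⟩ := br_of_cmt k0 j0 r11 (by simp [br]) (by simp [br]) (by simp [br])
    (by simp [br])
  obtain ⟨wa1, wa2, wa3, wa4⟩ := weight_one_of_congr hfa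
  obtain ⟨wb1, wb2, wb3, wb4⟩ := weight_one_of_congr hfb
  obtain ⟨wc1, wc2, wc3, wc4⟩ := weight_one_of_congr hfc
  obtain ⟨wd1, wd2, wd3, wd4⟩ := weight_one_of_congr hfd
  have eA : φ (f A) = sc m α := by rw [← FA, hF]; rfl
  have eB : φ (f B) = sc n β := by rw [← FB, hF]; rfl
  have eC : φ (f C) = sc k γ := by rw [← FC, hF]; rfl
  have eD : φ (f D) = sc j δ := by rw [← FD, hF]; rfl
  rw [eA] at wa1 wa2 wa3 wa4
  rw [eB] at wb1 wb2 wb3 wb4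
  rw [eC] at wc1 wc2 wc3 wc4
  rw [eD] at wd1 wd2 wd3 wd4
  have hdet' : (Nf.det : ℚ) ≠ 0 := by exact_mod_cast hdet
  obtain ⟨⟨a1, a2, a3, a4⟩, ⟨b1, b2, b3, b4⟩, ⟨c1, c2, c3, c4⟩, ⟨d1, d2, d3, d4⟩⟩ :=
    rigid hx hy hz hw hu kx ky kz kw r1 r2 r5 r6 r7 r9 (by
      intro h0
      apply hdet'
      rw [det_four]
      push_cast
      simp only [← wa1, ← wa2, ← wa3, ← wa4, ← wb1, ← wb2, ← wb3, ← wb4, ← wc1, ← wc2, ← wc3,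
        ← wc4, ← wd1, ← wd2, ← wd3, ← wd4, sc]
      linear_combination (m * n * k * j : ℚ) * h0)
  rw [eA, eB, eC, eD]
  simp only [sc, a1, a2, a3, a4, b1, b2, b3, b4, c1, c2, c3, c4, d1, d2, d3, d4]
  simp

/-- A virtual endomorphism with nonsingular exponent matrix fixes every element of weight three. -/
lemma map_central_form {H : Subgroup N34} (f : ↥H →* N34) {m n k j : ℕ} (hm : 0 < m) (hn : 0 < n)
    (hk : 0 < k) (hj : 0 < j) {A B C D : ↥H}
    (hA : (A : N34) = ga ^ m) (hB : (B : N34) = gb ^ n) (hC : (C : N34) = gc ^ k)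
    (hD : (D : N34) = gd ^ j)
    (wA : (φ (f A)).a = m ∧ (φ (f A)).b = 0 ∧ (φ (f A)).c = 0 ∧ (φ (f A)).d = 0)
    (wB : (φ (f B)).a = 0 ∧ (φ (f B)).b = n ∧ (φ (f B)).c = 0 ∧ (φ (f B)).d = 0)
    (wC : (φ (f C)).a = 0 ∧ (φ (f C)).b = 0 ∧ (φ (f C)).c = k ∧ (φ (f C)).d = 0)
    (wD : (φ (f D)).a = 0 ∧ (φ (f D)).b = 0 ∧ (φ (f D)).c = 0 ∧ (φ (f D)).d = j)
    {z : ↥H} {iu iv ip iq ir : ℤ}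
    (hz : (z : N34) = gu ^ iu * (gv ^ iv * (gp ^ ip * (gq ^ iq * gr ^ ir)))) :
    f z = z := by
  have m0 : (m : ℚ) ≠ 0 := by exact_mod_cast hm.ne'
  have n0 : (n : ℚ) ≠ 0 := by exact_mod_cast hn.ne'
  have k0 : (k : ℚ) ≠ 0 := by exact_mod_cast hk.ne'
  have j0 : (j : ℚ) ≠ 0 := by exact_mod_cast hj.ne'
  obtain ⟨F, hF⟩ : ∃ F : ↥H →* Mal, F = φ.comp f := ⟨_, rfl⟩
  obtain ⟨ι, hι⟩ : ∃ ι : ↥H →* Mal, ι = φ.comp H.subtype := ⟨_, rfl⟩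
  have iA : ι A = ⟨m, 0, 0, 0, 0, 0, 0, 0, 0, 0, 0, 0, 0⟩ := by
    have : ι A = sc m (φ ga) := by rw [hι, ← npow_eq, ← map_pow, ← hA]; rfl
    rw [this, φ_ga]; simp [sc]
  have iB : ι B = ⟨0, n, 0, 0, 0, 0, 0, 0, 0, 0, 0, 0, 0⟩ := by
    have : ι B = sc n (φ gb) := by rw [hι, ← npow_eq, ← map_pow, ← hB]; rfl
    rw [this, φ_gb]; simp [sc]
  have iC : ι C = ⟨0, 0, k, 0, 0, 0, 0, 0, 0, 0, 0, 0, 0⟩ := by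
    have : ι C = sc k (φ gc) := by rw [hι, ← npow_eq, ← map_pow, ← hC]; rfl
    rw [this, φ_gc]; simp [sc]
  have iD : ι D = ⟨0, 0, 0, j, 0, 0, 0, 0, 0, 0, 0, 0, 0⟩ := by
    have : ι D = sc j (φ gd) := by rw [hι, ← npow_eq, ← map_pow, ← hD]; rfl
    rw [this, φ_gd]; simp [sc]
  have FA : F A = φ (f A) := by rw [hF]; rfl
  have FB : F B = φ (f B) := by rw [hF]; rfl
  have FC : F C = φ (f C) := by rw [hF]; rfl
  have FD : F D = φ (f D) := by rw [hF]; rfl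
  rw [← FA] at wA
  rw [← FB] at wB
  rw [← FC] at wC
  rw [← FD] at wD
  have eu : F (cmt (cmt A C) C) = ι (cmt (cmt A C) C) := by
    simp only [map_cmt, cmt_cmt_left]
    refine (br_br_congr ?_ ?_ ?_ ?_ ?_ ?_ ?_ ?_ ?_ ?_ ?_ ?_).1 <;> simp [wA, wC, iA, iC]
  have ev : F (cmt A (cmt A C)) = ι (cmt A (cmt A C)) := by
    simp only [map_cmt, cmt_cmt_right]
    refine (br_br_congr ?_ ?_ ?_ ?_ ?_ ?_ ?_ ?_ ?_ ?_ ?_ ?_).2 <;> simp [wA, wC, iA, iC]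
  have ep : F (cmt (cmt A C) B) = ι (cmt (cmt A C) B) := by
    simp only [map_cmt, cmt_cmt_left]
    refine (br_br_congr ?_ ?_ ?_ ?_ ?_ ?_ ?_ ?_ ?_ ?_ ?_ ?_).1 <;> simp [wA, wB, wC, iA, iB, iC]
  have eq : F (cmt A (cmt A D)) = ι (cmt A (cmt A D)) := by
    simp only [map_cmt, cmt_cmt_right]
    refine (br_br_congr ?_ ?_ ?_ ?_ ?_ ?_ ?_ ?_ ?_ ?_ ?_ ?_).2 <;> simp [wA, wD, iA, iD]
  have er : F (cmt (cmt A D) B) = ι (cmt (cmt A D) B) := by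
    simp only [map_cmt, cmt_cmt_left]
    refine (br_br_congr ?_ ?_ ?_ ?_ ?_ ?_ ?_ ?_ ?_ ?_ ?_ ?_).1 <;> simp [wA, wB, wD, iA, iB, iD]
  -- a common power of the elements of weight three is generated by commutators in `H`
  have hpow : z ^ (m * m * k * k * n * j) =
      cmt (cmt A C) C ^ (iu * (m * n * j)) * (cmt A (cmt A C) ^ (iv * (k * n * j)) *
      (cmt (cmt A C) B ^ (ip * (m * k * j)) * (cmt A (cmt A D) ^ (iq * (k * k * n)) *
      cmt (cmt A D) B ^ (ir * (m * k * k))))) := by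
    have hinj : Function.Injective ι := by
      rw [hι]; exact φ_injective.comp Subtype.val_injective
    apply hinj
    have iz : ι z = ⟨0, 0, 0, 0, 0, 0, 0, 0, iu, iv, ip, iq, ir⟩ := by
      rw [← φ_central_form, ← hz, hι]; rfl
    simp only [map_mul, map_zpow, map_pow, zpow_eq, npow_eq, map_cmt, cmt_cmt_left, cmt_cmt_right,
      iA, iB, iC, iD, iz]
    ext <;> simp [mul_def, add, sc, br] <;> ring
  have hFz : F z = ι z := by
    apply sc_inj (t := ((m * m * k * k * n * j : ℕ) : ℚ)) (by positivity)
    rw [← npow_eq, ← npow_eq, ← map_pow, ← map_pow, hpow]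
    simp only [map_mul, map_zpow, eu, ev, ep, eq, er]
  rw [hF, hι] at hFz
  exact φ_injective hFz

end N34

/-- Let `f : H → N_{3,4}` be a virtual endomorphism of `G = N_{3,4}`, let
`K = ⟨aᵐ, bⁿ, cᵏ, dʲ⟩ ≤ H`, and let `Nf` be the `4 × 4` integer exponent matrix of `f`
(recording the images of `aᵐ, bⁿ, cᵏ, dʲ` modulo `G'`). If `det Nf ≠ 0`, then
`f(Z(K)) ≤ Z(K)`. -/
theorem N34_center_invariant_of_det_ne_zero
    (H : Subgroup N34) (hH : H.FiniteIndex) (f : ↥H →* N34)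
    (m n k j : ℕ) (hm : 0 < m) (hn : 0 < n) (hk : 0 < k) (hj : 0 < j)
    (ham : ga ^ m ∈ H) (hbn : gb ^ n ∈ H) (hck : gc ^ k ∈ H) (hdj : gd ^ j ∈ H)
    (K : Subgroup N34)
    (hK : K = Subgroup.closure {ga ^ m, gb ^ n, gc ^ k, gd ^ j})
    (hKH : K ≤ H)
    (Nf : Matrix (Fin 4) (Fin 4) ℤ)
    (hfa : f ⟨ga ^ m, ham⟩ *
      (ga ^ Nf 0 0 * gb ^ Nf 0 1 * gc ^ Nf 0 2 * gd ^ Nf 0 3)⁻¹ ∈ commutator N34)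
    (hfb : f ⟨gb ^ n, hbn⟩ *
      (ga ^ Nf 1 0 * gb ^ Nf 1 1 * gc ^ Nf 1 2 * gd ^ Nf 1 3)⁻¹ ∈ commutator N34)
    (hfc : f ⟨gc ^ k, hck⟩ *
      (ga ^ Nf 2 0 * gb ^ Nf 2 1 * gc ^ Nf 2 2 * gd ^ Nf 2 3)⁻¹ ∈ commutator N34)
    (hfd : f ⟨gd ^ j, hdj⟩ *
      (ga ^ Nf 3 0 * gb ^ Nf 3 1 * gc ^ Nf 3 2 * gd ^ Nf 3 3)⁻¹ ∈ commutator N34)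
    (hdet : Nf.det ≠ 0) :
    Subgroup.map f ((Subgroup.map K.subtype (Subgroup.center ↥K)).subgroupOf H)
      ≤ Subgroup.map K.subtype (Subgroup.center ↥K) := by
  rintro _ ⟨h, hh, rfl⟩
  have hh' : (h : N34) ∈ Subgroup.map K.subtype (Subgroup.center ↥K) := hh
  obtain ⟨κ, hκ, hκh⟩ := hh'
  have hκh' : (κ : N34) = h := hκh
  rw [SetLike.mem_coe, Subgroup.mem_center_iff] at hκ
  have comm : ∀ g ∈ K, (h : N34) * g = g * h := by
    intro g hg
    have := congrArg Subtype.val (hκ ⟨g, hg⟩)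
    rw [← hκh']
    exact this.symm
  have haK : ga ^ m ∈ K := by rw [hK]; exact Subgroup.subset_closure (by simp)
  have hcK : gc ^ k ∈ K := by rw [hK]; exact Subgroup.subset_closure (by simp)
  obtain ⟨iu, iv, ip, iq, ir, hz⟩ :=
    N34.exists_central_form_of_commute hm hk (comm _ haK) (comm _ hcK)
  obtain ⟨wA, wB, wC, wD⟩ := N34.exponents f hm hn hk hj (A := ⟨ga ^ m, ham⟩)
    (B := ⟨gb ^ n, hbn⟩) (C := ⟨gc ^ k, hck⟩) (D := ⟨gd ^ j, hdj⟩) rfl rfl rfl rfl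
    hfa hfb hfc hfd hdet
  rw [N34.map_central_form f hm hn hk hj (A := ⟨ga ^ m, ham⟩)
    (B := ⟨gb ^ n, hbn⟩) (C := ⟨gc ^ k, hck⟩) (D := ⟨gd ^ j, hdj⟩) rfl rfl rfl rfl
    wA wB wC wD hz]
  exact hh
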